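/- arXiv:2405.15407 — 2 statements merged into one kernel-verified Lean document; each statement's English description precedes it below -/
import Mathlib

section
/- Let E be a real inner product space, and let F : E → ℝ be convex and differentiable with gradient ∇F. Fix reals ρ > 0, γ > 0, ε > 0, β₀ ∈ (0,1], V₁ ≥ 0, V₂ ≥ 0, C ≥ 0, L > 0, natural numbers S ≥ 1, H_min ≥ 1, H_max ≥ H_min, and a function H : Fin S → ℕ with H_min ≤ H s ≤ H_max for every s. Suppose given: points w : ℕ → E (the cluster model iterates), anchors u : Fin S → E, and differentiable losses f : Fin S → (E → ℝ); for each s define J_s(v) = f s v + (ρ/2)‖v − u s‖² and 𝕁_s(v) = F v + (ρ/2)‖v − u s‖². Assume for every s: (i) the gradient of 𝕁_s is L-Lipschitz and ∇F is L-Lipschitz; (ii) ‖∇J_s(x)‖² ≤ V₂ for all x ∈ E; (iii) ‖∇F(w s)‖² ≤ V₁; (iv) ‖u s − w s‖ ≤ C; define local iterates v s 0 = u s and v s (h+1) = v s h − γ • ∇J_s(v s h), and assume (v) ⟪∇𝕁_s(v s h), ∇J_s(v s h)⟫ ≥ ε‖∇F(v s h)‖² for all h < H s; and let the cluster model be updated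 by w (s+1) = (1−β₀) • (w s) + β₀ • (v s (H s)). Then the average squared gradient norm of F along all local iterates satisfies: (1/Σ_{s<S} H s) · Σ_{s<S} Σ_{h<H s} ‖∇F(v s h)‖² ≤ (F(w 0) − F(w S))/(β₀ γ ε S H_min) + ((L/2 + ρ H_max + ρ H_max²/2) γ H_max V₂)/(ε H_min) + (√V₁ · C)/(γ ε H_min) + ((L/2 + ρ) C²)/(γ ε H_min). -/
/-!
Local gradient steps decrease the regularized cluster objective `Jc s` up to an error: the descent lemma
for functions with Lipschitz gradient, together with the inner-product hypothesis, shows that step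
`h` lowers `Jc s` by at least `γ ε ‖∇F (v s h)‖² - (L/2) γ² V₂`. Telescoping over `h`, and using
that the proximal term vanishes at `v s 0 = u s` and is nonnegative at the last local iterate,
bounds `γ ε ∑ ‖∇F (v s h)‖²` by `F (u s) - F (v s (H s))` plus an error. The descent lemma for `F`
at `w s` compares `F (u s)` with `F (w s)`, and convexity of `F` along the averaging step gives
`F (w s) - F (v s (H s)) ≤ (F (w s) - F (w (s + 1))) / β₀`. Telescoping over `s` and dividing by
`∑ H s ≥ S * Hmin` yields the claim; the argument even gives it without the terms in `ρ`, which are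
nonnegative.
-/

open RealInnerProductSpace

/-- The descent lemma: a function with `L`-Lipschitz gradient lies below its quadratic model. -/
lemma descent_of_lipschitz_gradient {E : Type*} [NormedAddCommGroup E] [InnerProductSpace ℝ E]
    [CompleteSpace E] {G : E → ℝ} (hG : Differentiable ℝ G) {L : ℝ} (hL : 0 ≤ L)
    (hlip : LipschitzWith L.toNNReal (gradient G)) (x d : E) :
    G (x + d) ≤ G x + ⟪gradient G x, d⟫ + L / 2 * ‖d‖ ^ 2 := by
  -- `φ` is, up to the constant `G x`, the gap between `G` and its quadratic model along the ray;
  -- it is antitone on `t ≥ 0`.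
  let φ : ℝ → ℝ := fun t =>
    G (x + t • d) - t * ⟪gradient G x, d⟫ - t ^ 2 * (L / 2 * ‖d‖ ^ 2)
  have hφ : ∀ t, HasDerivAt φ
      (⟪gradient G (x + t • d), d⟫ - ⟪gradient G x, d⟫ - 2 * t * (L / 2 * ‖d‖ ^ 2)) t := by
    intro t
    have h1 : HasDerivAt (fun t : ℝ => x + t • d) d t := by
      simpa using ((hasDerivAt_id t).smul_const d).const_add x
    have h2 := (hG (x + t • d)).hasGradientAt.hasFDerivAt.comp_hasDerivAt t h1
    have h3 := (hasDerivAt_id t).mul_const ⟪gradient G x, d⟫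
    have h4 := (hasDerivAt_pow 2 t).mul_const (L / 2 * ‖d‖ ^ 2)
    have h5 := (h2.sub h3).sub h4
    refine h5.congr_deriv ?_
    simp
  have hanti : AntitoneOn φ (Set.Ici 0) := by
    refine antitoneOn_of_deriv_nonpos (convex_Ici 0)
      (fun t _ => (hφ t).continuousAt.continuousWithinAt)
      (fun t _ => (hφ t).differentiableAt.differentiableWithinAt) ?_
    intro t ht
    rw [interior_Ici, Set.mem_Ioi] at ht
    rw [(hφ t).deriv, ← inner_sub_left]
    have h1 := real_inner_le_norm (gradient G (x + t • d) - gradient G x) d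
    have h2 : ‖gradient G (x + t • d) - gradient G x‖ ≤ L * (t * ‖d‖) := by
      have h := hlip.dist_le_mul (x + t • d) x
      rw [dist_eq_norm, dist_eq_norm, Real.coe_toNNReal L hL, add_sub_cancel_left, norm_smul,
        Real.norm_of_nonneg ht.le] at h
      exact h
    have h3 := mul_le_mul_of_nonneg_right h2 (norm_nonneg d)
    nlinarith
  have h := hanti (Set.mem_Ici.2 le_rfl) (Set.mem_Ici.2 zero_le_one) zero_le_one
  simp only [φ, one_smul, zero_smul, add_zero] at h
  linarith

/-- Deterministic version of Theorem 1 (convergence of CDFL on a single cluster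
objective): the average squared gradient norm of the cluster objective `F` along
all local iterates of the client is bounded by the total decrease of `F` along the
cluster model iterates plus constant error terms. -/
theorem cdfl_convergence
    {E : Type*} [NormedAddCommGroup E] [InnerProductSpace ℝ E] [CompleteSpace E]
    (F : E → ℝ) (hFconv : ConvexOn ℝ Set.univ F) (hFdiff : Differentiable ℝ F)
    (ρ γ ε β₀ V₁ V₂ C L : ℝ)
    (hρ : 0 < ρ) (hγ : 0 < γ) (hε : 0 < ε) (hβ₀ : β₀ ∈ Set.Ioc (0 : ℝ) 1)
    (hV₁ : 0 ≤ V₁) (hV₂ : 0 ≤ V₂) (hC : 0 ≤ C) (hL : 0 < L)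
    (S Hmin Hmax : ℕ) (hS : 1 ≤ S) (hHmin : 1 ≤ Hmin) (hHmax : Hmin ≤ Hmax)
    (H : Fin S → ℕ) (hH : ∀ s, Hmin ≤ H s ∧ H s ≤ Hmax)
    (w : ℕ → E) (u : Fin S → E) (f : Fin S → E → ℝ)
    (hfdiff : ∀ s, Differentiable ℝ (f s))
    (J Jc : Fin S → E → ℝ)
    (hJ : ∀ s, ∀ x : E, J s x = f s x + (ρ / 2) * ‖x - u s‖ ^ 2)
    (hJc : ∀ s, ∀ x : E, Jc s x = F x + (ρ / 2) * ‖x - u s‖ ^ 2)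
    (hlipJc : ∀ s, LipschitzWith L.toNNReal (gradient (Jc s)))
    (hlipF : LipschitzWith L.toNNReal (gradient F))
    (hgradJ : ∀ s, ∀ x : E, ‖gradient (J s) x‖ ^ 2 ≤ V₂)
    (hgradFw : ∀ s : Fin S, ‖gradient F (w s)‖ ^ 2 ≤ V₁)
    (huw : ∀ s : Fin S, ‖u s - w s‖ ≤ C)
    (v : Fin S → ℕ → E)
    (hv0 : ∀ s, v s 0 = u s)
    (hvstep : ∀ s, ∀ h : ℕ, v s (h + 1) = v s h - γ • gradient (J s) (v s h))
    (hip : ∀ s, ∀ h < H s,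
      ⟪gradient (Jc s) (v s h), gradient (J s) (v s h)⟫ ≥ ε * ‖gradient F (v s h)‖ ^ 2)
    (hwstep : ∀ s : Fin S, w ((s : ℕ) + 1) = (1 - β₀) • w s + β₀ • v s (H s)) :
    (1 / ∑ s, (H s : ℝ)) * ∑ s, ∑ h ∈ Finset.range (H s), ‖gradient F (v s h)‖ ^ 2 ≤
      (F (w 0) - F (w S)) / (β₀ * γ * ε * (S : ℝ) * (Hmin : ℝ))
        + ((L / 2 + ρ * (Hmax : ℝ) + ρ * (Hmax : ℝ) ^ 2 / 2) * γ * (Hmax : ℝ) * V₂)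
            / (ε * (Hmin : ℝ))
        + (Real.sqrt V₁ * C) / (γ * ε * (Hmin : ℝ))
        + ((L / 2 + ρ) * C ^ 2) / (γ * ε * (Hmin : ℝ)) := by
  obtain ⟨hβ, hβ1⟩ := hβ₀
  have hJcdiff : ∀ s, Differentiable ℝ (Jc s) := by
    intro s
    have : Jc s = fun x => F x + (ρ / 2) * ‖x - u s‖ ^ 2 := funext (hJc s)
    rw [this]
    exact hFdiff.add (((differentiable_id.sub_const (u s)).norm_sq ℝ).const_mul _)
  have hlocal : ∀ s, ∀ n ≤ H s,
      γ * ε * ∑ h ∈ Finset.range n, ‖gradient F (v s h)‖ ^ 2 ≤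
        Jc s (u s) - Jc s (v s n) + n * (L / 2 * γ ^ 2 * V₂) := by
    intro s n
    induction n with
    | zero => intro _; simp [hv0]
    | succ n ih =>
      intro hn
      have h1 := ih (by omega)
      have h2 := descent_of_lipschitz_gradient (hJcdiff s) hL.le (hlipJc s) (v s n)
        (-(γ • gradient (J s) (v s n)))
      rw [← sub_eq_add_neg, ← hvstep, inner_neg_right, inner_smul_right, norm_neg, norm_smul,
        mul_pow, Real.norm_of_nonneg hγ.le] at h2
      have h3 := mul_le_mul_of_nonneg_left (hip s n (by omega)) hγ.le
      have h4 := mul_le_mul_of_nonneg_left (hgradJ s (v s n))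
        (by positivity : 0 ≤ L / 2 * γ ^ 2)
      rw [Finset.sum_range_succ]
      push_cast
      linarith
  set A : ℝ := √V₁ * C + L / 2 * C ^ 2 + Hmax * (L / 2 * γ ^ 2 * V₂) with hA
  have hround : ∀ s : Fin S,
      γ * ε * ∑ h ∈ Finset.range (H s), ‖gradient F (v s h)‖ ^ 2 ≤
        (F (w s) - F (w ((s : ℕ) + 1))) / β₀ + A := by
    intro s
    have h1 := hlocal s (H s) le_rfl
    have h2 : Jc s (u s) = F (u s) := by simp [hJc]
    have h3 : F (v s (H s)) ≤ Jc s (v s (H s)) := by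
      rw [hJc]
      have : 0 ≤ ρ / 2 * ‖v s (H s) - u s‖ ^ 2 := by positivity
      linarith
    have h4 : F (u s) ≤ F (w s) + √V₁ * C + L / 2 * C ^ 2 := by
      have h := descent_of_lipschitz_gradient hFdiff hL.le hlipF (w s) (u s - w s)
      rw [add_sub_cancel] at h
      have hin : ⟪gradient F (w s), u s - w s⟫ ≤ √V₁ * C :=
        (real_inner_le_norm _ _).trans (mul_le_mul (Real.le_sqrt_of_sq_le (hgradFw s)) (huw s)
          (norm_nonneg _) (Real.sqrt_nonneg _))
      have hsq : L / 2 * ‖u s - w s‖ ^ 2 ≤ L / 2 * C ^ 2 := by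
        gcongr
        exact huw s
      linarith
    have h5 : F (w s) - F (v s (H s)) ≤ (F (w s) - F (w ((s : ℕ) + 1))) / β₀ := by
      have h := hFconv.2 (Set.mem_univ (w s)) (Set.mem_univ (v s (H s)))
        (sub_nonneg.2 hβ1) hβ.le (by ring)
      rw [← hwstep, smul_eq_mul, smul_eq_mul] at h
      rw [le_div_iff₀ hβ]
      linarith
    have h6 : (H s : ℝ) * (L / 2 * γ ^ 2 * V₂) ≤ Hmax * (L / 2 * γ ^ 2 * V₂) := by
      have : (H s : ℝ) ≤ Hmax := by exact_mod_cast (hH s).2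
      gcongr
    linarith
  set T : ℝ := ∑ s, ∑ h ∈ Finset.range (H s), ‖gradient F (v s h)‖ ^ 2 with hT
  have hT0 : 0 ≤ T := by positivity
  have htotal : γ * ε * T ≤ (F (w 0) - F (w S)) / β₀ + S * A := by
    have h := Finset.sum_le_sum (fun s (_ : s ∈ Finset.univ) => hround s)
    rw [← Finset.mul_sum, Finset.sum_add_distrib, ← Finset.sum_div,
      Fin.sum_univ_eq_sum_range (fun i => F (w i) - F (w (i + 1))) S,
      Finset.sum_range_sub' (fun i => F (w i)) S] at h
    simpa using h
  have hSpos : (0 : ℝ) < S := by exact_mod_cast hS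
  have hmpos : (0 : ℝ) < Hmin := by exact_mod_cast hHmin
  have hsum : (S : ℝ) * Hmin ≤ ∑ s, (H s : ℝ) := by
    have h := Finset.card_nsmul_le_sum Finset.univ (fun s => (H s : ℝ)) (Hmin : ℝ)
      (fun s _ => by exact_mod_cast (hH s).1)
    simpa using h
  -- The terms in `ρ` of the claimed bound are slack.
  have hslack : A ≤ (L / 2 + ρ * Hmax + ρ * Hmax ^ 2 / 2) * γ ^ 2 * Hmax * V₂
      + √V₁ * C + (L / 2 + ρ) * C ^ 2 := by
    have h1 : 0 ≤ (ρ * Hmax + ρ * Hmax ^ 2 / 2) * γ ^ 2 * Hmax * V₂ := by positivity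
    have h2 : 0 ≤ ρ * C ^ 2 := by positivity
    rw [hA]
    linarith
  calc (1 / ∑ s, (H s : ℝ)) * T ≤ (1 / (S * Hmin)) * T := by gcongr
    _ = (γ * ε * T) / (γ * ε * S * Hmin) := by field_simp
    _ ≤ ((F (w 0) - F (w S)) / β₀ + S * ((L / 2 + ρ * Hmax + ρ * Hmax ^ 2 / 2) * γ ^ 2 * Hmax * V₂
          + √V₁ * C + (L / 2 + ρ) * C ^ 2)) / (γ * ε * S * Hmin) := by
        gcongr
        exact htotal.trans (by gcongr)
    _ = _ := by
        field_simp
        ring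
end

section
/- Let E be a real inner product space, let a, b, d ∈ E with d ≠ 0, and let V₁ ≥ 0 and ε > 0 be reals with ‖a‖² ≤ V₁ and ‖b‖² ≤ V₁. If ρ is a real number with ρ ≥ (2V₁ + ½‖d‖² + √(4‖d‖²·(1+ε)·V₁))/(2‖d‖²), then ⟪a + ρ•d, b + ρ•d⟫ ≥ ε·‖a‖². -/
/-!
Put `X = ρ‖d‖`, `s = √V₁`, `t = ‖a + b‖ ≤ 2s` and `r = √(1 + ε)`. By AM-GM,
`2 s ‖d‖ ≤ 2 V₁ + ‖d‖² / 2`, so the hypothesis on `ρ` gives `X ≥ s + s r`.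
Polarization, `2⟪a, b⟫ = t² - ‖a‖² - ‖b‖²`, and Cauchy-Schwarz, `⟪a + b, d⟫ ≥ -t‖d‖`, bound the
inner product below by `t² / 2 - s² - X t + X² = (X - s)² + (2 s - t)(X - s - t / 2)`.
The last product is nonnegative because `X ≥ 2 s`, and `(X - s)² ≥ s² r² = (1 + ε) V₁ ≥ ε‖a‖²`.
-/

open RealInnerProductSpace

/-- Key inequality (help-eq1): for `ρ` large enough,
`⟪a + ρ•d, b + ρ•d⟫ ≥ ε‖a‖²`. -/
theorem inner_add_smul_ge_eps
    {E : Type*} [NormedAddCommGroup E] [InnerProductSpace ℝ E]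
    (a b d : E) (hd : d ≠ 0) (V₁ ε ρ : ℝ) (hV₁ : 0 ≤ V₁) (hε : 0 < ε)
    (ha : ‖a‖ ^ 2 ≤ V₁) (hb : ‖b‖ ^ 2 ≤ V₁)
    (hρ : ρ ≥ (2 * V₁ + ‖d‖ ^ 2 / 2 + Real.sqrt (4 * ‖d‖ ^ 2 * (1 + ε) * V₁)) /
      (2 * ‖d‖ ^ 2)) :
    ⟪a + ρ • d, b + ρ • d⟫ ≥ ε * ‖a‖ ^ 2 := by
  have hδ : 0 < ‖d‖ := norm_pos_iff.mpr hd
  obtain ⟨s, hs, hsV⟩ : ∃ s : ℝ, 0 ≤ s ∧ s ^ 2 = V₁ :=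
    ⟨√V₁, Real.sqrt_nonneg _, Real.sq_sqrt hV₁⟩
  obtain ⟨r, hr, hrε⟩ : ∃ r : ℝ, 0 ≤ r ∧ r ^ 2 = 1 + ε :=
    ⟨√(1 + ε), Real.sqrt_nonneg _, Real.sq_sqrt (by linarith)⟩
  have hr1 : 1 ≤ r := by nlinarith
  have hsqrt : Real.sqrt (4 * ‖d‖ ^ 2 * (1 + ε) * V₁) = 2 * ‖d‖ * r * s := by
    rw [← hsV, ← hrε, show 4 * ‖d‖ ^ 2 * r ^ 2 * s ^ 2 = (2 * ‖d‖ * r * s) ^ 2 by ring]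
    exact Real.sqrt_sq (by positivity)
  rw [hsqrt, ge_iff_le, div_le_iff₀ (by positivity)] at hρ
  have hX : s + s * r ≤ ρ * ‖d‖ := by
    -- the AM-GM step is `0 ≤ (2 s - ‖d‖)² / 2`, after multiplying through by `2‖d‖`
    have h : (s + s * r) * (2 * ‖d‖) ≤ ρ * ‖d‖ * (2 * ‖d‖) := by
      nlinarith [sq_nonneg (2 * s - ‖d‖)]
    exact le_of_mul_le_mul_right h (by positivity)
  have has : ‖a‖ ≤ s := abs_le_of_sq_le_sq' (by linarith) hs |>.2
  have hbs : ‖b‖ ≤ s := abs_le_of_sq_le_sq' (by linarith) hs |>.2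
  have ht : ‖a + b‖ ≤ 2 * s := (norm_add_le a b).trans (by linarith)
  have hX2 : 2 * s ≤ ρ * ‖d‖ := by nlinarith
  have hρ0 : 0 ≤ ρ := nonneg_of_mul_nonneg_left (by linarith) hδ
  have hpol : ‖a + b‖ ^ 2 = ‖a‖ ^ 2 + 2 * ⟪a, b⟫ + ‖b‖ ^ 2 := norm_add_sq_real a b
  have hcs : -(‖a + b‖ * ‖d‖) ≤ ⟪a + b, d⟫ := (abs_le.mp (abs_real_inner_le_norm _ _)).1
  have hcsρ := mul_le_mul_of_nonneg_left hcs hρ0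
  have hexp : ⟪a + ρ • d, b + ρ • d⟫ = ⟪a, b⟫ + ρ * ⟪a + b, d⟫ + (ρ * ‖d‖) ^ 2 := by
    simp only [inner_add_left, inner_add_right, real_inner_smul_left, real_inner_smul_right,
      real_inner_self_eq_norm_sq, real_inner_comm b d, norm_smul, mul_pow, Real.norm_eq_abs,
      sq_abs]
    ring
  have hprod : 0 ≤ (2 * s - ‖a + b‖) * (ρ * ‖d‖ - s - ‖a + b‖ / 2) :=
    mul_nonneg (by linarith) (by linarith)
  have hsq : (s * r) ^ 2 ≤ (ρ * ‖d‖ - s) ^ 2 :=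
    pow_le_pow_left₀ (by positivity) (by linarith) 2
  rw [mul_pow, hsV, hrε] at hsq
  have hεa : ε * ‖a‖ ^ 2 ≤ ε * V₁ := mul_le_mul_of_nonneg_left ha hε.le
  rw [hexp]
  nlinarith
end
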